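/- The Masser–Oesterlé abc Conjecture implies the Small Derivatives Conjecture: suppose that for every ε > 0 there is a constant κ_ε > 0 such that all coprime positive integers a, b, c with a + b = c satisfy c < κ_ε · rad(abc)^{1+ε}. Then there exists a constant 0 < η < 1 such that for all but finitely many triples of coprime positive integers (a,b,c) satisfying a + b = c and not, up to order, of the form (1, N, q) with q prime, there exists ψ ∈ 𝒯(a,b) such that a, b are ψ-independent and ‖ψ‖ < c^η. -/

import Mathlib

open Finset

/-- The arithmetic derivative attached to `ψ`: `d^ψ(n) = Σ_{p ∣ n} (n·v_p(n)/p)·ψ(p)`,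
with `d^ψ(0) = 0` (empty sum). Each term is written as `(n/p)·v_p(n)·ψ(p)`, exact since `p ∣ n`. -/
def dpsi (ψ : ℕ → ℤ) (n : ℤ) : ℤ :=
  ∑ p ∈ n.natAbs.primeFactors, (n / (p : ℤ)) * (n.natAbs.factorization p : ℤ) * ψ p

/-- A derivation: a function on primes (zero off primes) with finite norm. -/
def IsDeriv (ψ : ℕ → ℤ) : Prop :=
  (∀ p : ℕ, ¬ p.Prime → ψ p = 0) ∧ ∃ B : ℤ, ∀ p : ℕ, |ψ p| ≤ B

/-- The norm `‖ψ‖ = sup_p |ψ(p)|`. -/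
noncomputable def dNorm (ψ : ℕ → ℤ) : ℝ := ⨆ p : ℕ, (|ψ p| : ℝ)

/-- Membership in `𝒯(a,b)`: a derivation supported on the primes dividing `ab(a+b)`
satisfying `d^ψ(a+b) = d^ψ(a) + d^ψ(b)`. -/
def MemT (a b : ℕ) (ψ : ℕ → ℤ) : Prop :=
  IsDeriv ψ ∧ (∀ p : ℕ, p.Prime → ¬ p ∣ (a * b * (a + b)) → ψ p = 0) ∧
    dpsi ψ ((a : ℤ) + (b : ℤ)) = dpsi ψ (a : ℤ) + dpsi ψ (b : ℤ)

/-- The `ψ`-Wronskian `W^ψ(a,b) = a·d^ψ(b) − b·d^ψ(a)`. -/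
def Wpsi (ψ : ℕ → ℤ) (a b : ℤ) : ℤ := a * dpsi ψ b - b * dpsi ψ a

/-- Membership in `𝒯°(a,b)`: elements of `𝒯(a,b)` for which `a, b` are `ψ`-dependent. -/
def MemT0 (a b : ℕ) (ψ : ℕ → ℤ) : Prop := MemT a b ψ ∧ Wpsi ψ (a : ℤ) (b : ℤ) = 0

/-- The radical of `n`: product of the distinct primes dividing `n`. -/
def radN (n : ℕ) : ℕ := ∏ p ∈ n.primeFactors, p

/-- The Small Derivatives Conjecture with exponent `η`: for all but finitely many triples of
coprime positive integers `(a,b,c)` with `a+b=c`, not of the form `(1,N,q)` with `q` prime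
up to order, there is `ψ ∈ 𝒯(a,b)` with `a,b` `ψ`-independent and `‖ψ‖ < c^η`. -/
def SDC (η : ℝ) : Prop :=
  {t : ℕ × ℕ × ℕ | 0 < t.1 ∧ 0 < t.2.1 ∧ t.1 + t.2.1 = t.2.2 ∧ Nat.Coprime t.1 t.2.1 ∧
    ¬ (∃ N q : ℕ, q.Prime ∧ ({t.1, t.2.1, t.2.2} : Multiset ℕ) = {1, N, q}) ∧
    ¬ ∃ ψ : ℕ → ℤ, MemT t.1 t.2.1 ψ ∧ Wpsi ψ (t.1 : ℤ) (t.2.1 : ℤ) ≠ 0 ∧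
      dNorm ψ < (t.2.2 : ℝ) ^ η}.Finite

/-!
Put `n = (a, b, -(a + b))`, so that `∑ nᵢ = 0`. Since the `nᵢ` are pairwise coprime, the values
`ψ p` can be chosen for each `nᵢ` separately, and `ψ ∈ 𝒯(a,b)` becomes one linear equation in them
with coefficients `nᵢ v_p(nᵢ) / p`, each of size at most about `c`. Independence says that the
derivatives are not proportional to `n`. Write `L = c ^ (1 / K)`; we want `ψ` of norm below
`c / L`.

If some `nᵢ` has a prime `s > L ^ 5`, the pigeonhole principle solves a three-term equation with the
unknown `z` at `s` as small as `L ^ 4`. Proportionality to `n` would force `s ∣ z v_s(nᵢ)`, hence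
only the trivial solution. When one of the other members is a unit, a second prime of `nᵢ`, or a
large prime of the remaining member, serves as well; otherwise `nᵢ = s ^ e` with `e ≥ 2`, so
`rad nᵢ ≤ c ^ (1/2)`, and an abc bound with any exponent below `2` leaves a large radical for the
remaining member, whose primes are all small.

If a member `nᵢ` has a large radical and only small primes, call its prime `p` tame when
`p ∤ v_p(nᵢ)`. The tame radical `P` is almost as large as the radical, and partial fractions modulo
the tame primes make the multiples of `v nᵢ / P` by integers up to about `c`, with `v` one fixed
exponent of `nᵢ`, the derivatives of `nᵢ` for some small `ψ`. Being itself small, `v nᵢ / P` can be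
used as the value of `ψ` at one prime of another member, which solves the equation with two members.
-/

lemma factorization_eq_zero_iff_notMem_primeFactors {n p : ℕ} :
    n.factorization p = 0 ↔ p ∉ n.primeFactors := by
  rw [← Nat.support_factorization, Finsupp.notMem_support_iff]

lemma factorization_le_cardFactors (n p : ℕ) :
    n.factorization p ≤ ArithmeticFunction.cardFactors n := by
  by_cases hp : p ∈ n.primeFactors
  · rw [ArithmeticFunction.cardFactors_eq_sum_factorization]
    exact Finset.single_le_sum (f := n.factorization) (fun _ _ ↦ Nat.zero_le _) hp
  · simp [factorization_eq_zero_iff_notMem_primeFactors.mpr hp]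

/-- The coefficient of `ψ p` in `dpsi ψ n`, so that `derivCoeff n p = n · v_p(n) / p`. -/
def derivCoeff (n : ℤ) (p : ℕ) : ℤ := n / p * n.natAbs.factorization p

section DerivCoeff

variable {n : ℤ} {p : ℕ}

lemma derivCoeff_mul_self (n : ℤ) (p : ℕ) :
    derivCoeff n p * p = n * n.natAbs.factorization p := by
  by_cases hp : p ∈ n.natAbs.primeFactors
  · have hdvd : (p : ℤ) ∣ n := Int.natCast_dvd.mpr (Nat.dvd_of_mem_primeFactors hp)
    rw [derivCoeff, mul_right_comm, Int.ediv_mul_cancel hdvd]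
  · simp [derivCoeff, factorization_eq_zero_iff_notMem_primeFactors.mpr hp]

lemma derivCoeff_eq_zero (hp : p ∉ n.natAbs.primeFactors) : derivCoeff n p = 0 := by
  simp [derivCoeff, factorization_eq_zero_iff_notMem_primeFactors.mpr hp]

lemma derivCoeff_ne_zero (hp : p ∈ n.natAbs.primeFactors) : derivCoeff n p ≠ 0 := by
  have hn : n ≠ 0 := by rintro rfl; simp at hp
  refine left_ne_zero_of_mul (b := (p : ℤ)) ?_
  rw [derivCoeff_mul_self]
  exact mul_ne_zero hn (Int.natCast_ne_zero.mpr
    (factorization_eq_zero_iff_notMem_primeFactors.not_left.mpr hp))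

lemma dpsi_neg (ψ : ℕ → ℤ) (n : ℤ) : dpsi ψ (-n) = -dpsi ψ n := by
  rw [dpsi, dpsi, Int.natAbs_neg, ← Finset.sum_neg_distrib]
  refine Finset.sum_congr rfl fun p hp ↦ ?_
  have hdvd : (p : ℤ) ∣ n := Int.natCast_dvd.mpr (Nat.dvd_of_mem_primeFactors hp)
  rw [Int.neg_ediv_of_dvd hdvd]
  ring

lemma dpsi_eq_sum_derivCoeff {ψ : ℕ → ℤ} {s : Finset ℕ} (hψ : ∀ p ∉ s, ψ p = 0) (n : ℤ) :
    dpsi ψ n = ∑ p ∈ s, derivCoeff n p * ψ p := by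
  classical
  calc dpsi ψ n = ∑ p ∈ n.natAbs.primeFactors ∪ s, derivCoeff n p * ψ p :=
        Finset.sum_subset Finset.subset_union_left fun p _ hp ↦ by
          rw [← derivCoeff, derivCoeff_eq_zero hp, zero_mul]
    _ = ∑ p ∈ s, derivCoeff n p * ψ p :=
        (Finset.sum_subset Finset.subset_union_right fun p _ hp ↦ by
          rw [hψ p hp, mul_zero]).symm

end DerivCoeff

/-- `IsDerivValue n d X` says that `d` is the value at `n` of the derivative attached to a
derivation supported on the primes of `n` and of norm at most `X`. -/
def IsDerivValue (n d : ℤ) (X : ℝ) : Prop :=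
  ∃ φ : ℕ → ℤ, (∀ p ∉ n.natAbs.primeFactors, φ p = 0) ∧ (∀ p, (|φ p| : ℝ) ≤ X) ∧ dpsi φ n = d

namespace IsDerivValue

variable {n : ℤ} {X Y : ℝ}

lemma sum_mul_derivCoeff {s : Finset ℕ} (hs : s ⊆ n.natAbs.primeFactors) (hX : 0 ≤ X)
    {x : ℕ → ℤ} (hx : ∀ p ∈ s, (|x p| : ℝ) ≤ X) :
    IsDerivValue n (∑ p ∈ s, x p * derivCoeff n p) X := by
  classical
  refine ⟨fun p ↦ if p ∈ s then x p else 0, fun p hp ↦ if_neg fun h ↦ hp (hs h),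
    fun p ↦ ?_, ?_⟩
  · by_cases hp : p ∈ s
    · simpa [hp] using hx p hp
    · simpa [hp] using hX
  · rw [dpsi_eq_sum_derivCoeff (s := s) fun p hp ↦ if_neg hp]
    exact Finset.sum_congr rfl fun p hp ↦ by rw [if_pos hp, mul_comm]

lemma nonneg {d : ℤ} (h : IsDerivValue n d X) : 0 ≤ X :=
  let ⟨_, _, hφ, _⟩ := h
  (abs_nonneg _).trans (hφ 0)

lemma zero (hX : 0 ≤ X) : IsDerivValue n 0 X := by
  simpa using sum_mul_derivCoeff (n := n) (Finset.empty_subset _) hX (x := 0) (by simp)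

lemma mul_derivCoeff {p : ℕ} (hp : p ∈ n.natAbs.primeFactors) {x : ℤ} (hx : (|x| : ℝ) ≤ X) :
    IsDerivValue n (x * derivCoeff n p) X := by
  simpa using sum_mul_derivCoeff (Finset.singleton_subset_iff.mpr hp)
    ((abs_nonneg _).trans hx) (x := fun _ ↦ x) (by simpa using hx)

lemma mono {d : ℤ} (h : IsDerivValue n d X) (hXY : X ≤ Y) : IsDerivValue n d Y :=
  let ⟨φ, hsupp, hφ, hd⟩ := h
  ⟨φ, hsupp, fun p ↦ (hφ p).trans hXY, hd⟩

lemma add {d e : ℤ} (hd : IsDerivValue n d X) (he : IsDerivValue n e Y) :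
    IsDerivValue n (d + e) (X + Y) := by
  obtain ⟨φ, hφ_supp, hφ, rfl⟩ := hd
  obtain ⟨χ, hχ_supp, hχ, rfl⟩ := he
  refine ⟨φ + χ, fun p hp ↦ by simp [hφ_supp p hp, hχ_supp p hp], fun p ↦ ?_, ?_⟩
  · push_cast [Pi.add_apply]
    exact (abs_add_le _ _).trans (add_le_add (hφ p) (hχ p))
  · simp only [dpsi, Pi.add_apply, mul_add, Finset.sum_add_distrib]

end IsDerivValue

lemma disjoint_primeFactors_natAbs {m n : ℤ} (h : IsCoprime m n) :
    Disjoint m.natAbs.primeFactors n.natAbs.primeFactors :=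
  (Int.isCoprime_iff_nat_coprime.mp h).disjoint_primeFactors

lemma dpsi_congr {φ ψ : ℕ → ℤ} {n : ℤ} (h : ∀ p ∈ n.natAbs.primeFactors, φ p = ψ p) :
    dpsi φ n = dpsi ψ n :=
  Finset.sum_congr rfl fun p hp ↦ by rw [h p hp]

lemma exists_derivation_of_isDerivValue {ι : Type*} [Finite ι] {n d : ι → ℤ} {X : ℝ}
    (hX : 0 ≤ X) (hcop : Pairwise fun i j ↦ IsCoprime (n i) (n j))
    (h : ∀ i, IsDerivValue (n i) (d i) X) :
    ∃ ψ : ℕ → ℤ, (∀ p, (∀ i, p ∉ (n i).natAbs.primeFactors) → ψ p = 0) ∧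
      (∀ p, (|ψ p| : ℝ) ≤ X) ∧ ∀ i, dpsi ψ (n i) = d i := by
  have := Fintype.ofFinite ι
  choose φ hsupp hφ hd using h
  have heq (i : ι) (p : ℕ) (hp : p ∈ (n i).natAbs.primeFactors) : ∑ j, φ j p = φ i p :=
    Finset.sum_eq_single_of_mem i (Finset.mem_univ i) fun j _ hji ↦
      hsupp j p (Finset.disjoint_right.mp (disjoint_primeFactors_natAbs (hcop hji)) hp)
  refine ⟨fun p ↦ ∑ i, φ i p, fun p hp ↦ Finset.sum_eq_zero fun i _ ↦ hsupp i p (hp i),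
    fun p ↦ ?_, fun i ↦ (dpsi_congr (heq i)).trans (hd i)⟩
  by_cases hp : ∃ i, p ∈ (n i).natAbs.primeFactors
  · obtain ⟨i, hi⟩ := hp
    simpa only [heq i p hi] using hφ i p
  · push Not at hp
    simpa [Finset.sum_eq_zero fun i _ ↦ hsupp i p (hp i)] using hX

lemma pairwise_isCoprime_triple {a b : ℤ} (hab : IsCoprime a b) :
    Pairwise fun i j ↦ IsCoprime (![a, b, -(a + b)] i) (![a, b, -(a + b)] j) := by
  have hac : IsCoprime a (-(a + b)) := by
    simpa [add_comm] using (hab.add_mul_left_right 1).neg_right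
  have hbc : IsCoprime b (-(a + b)) := by
    simpa [add_comm] using (hab.symm.add_mul_left_right 1).neg_right
  intro i j hij
  fin_cases i <;> fin_cases j <;>
    first | exact absurd rfl hij | assumption | (apply IsCoprime.symm; assumption)

/-- Some derivation of norm at most `X`, supported on the primes of the `n i`, has derivatives
summing to zero over the family but not proportional to it. For pairwise coprime families this is
the existence of a small derivation in `𝒯(a,b)` for which `a, b` are independent, with the triple
encoded as `![a, b, -(a + b)]`. -/
def HasSmallIndepDeriv {ι : Type*} [Fintype ι] (n : ι → ℤ) (X : ℝ) : Prop :=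
  ∃ d : ι → ℤ, (∀ i, IsDerivValue (n i) (d i) X) ∧ ∑ i, d i = 0 ∧ ∃ i j, n i * d j ≠ n j * d i

namespace HasSmallIndepDeriv

variable {ι : Type*} [Fintype ι] {n : ι → ℤ} {i j k : ι} {X : ℝ}

lemma of_three (hij : i ≠ j) (hik : i ≠ k) (hjk : j ≠ k) {a b c : ℤ}
    (ha : IsDerivValue (n i) a X) (hb : IsDerivValue (n j) b X) (hc : IsDerivValue (n k) c X)
    (hsum : a + b + c = 0) (hindep : ¬(n i * b = n j * a ∧ n i * c = n k * a)) :
    HasSmallIndepDeriv n X := by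
  classical
  refine ⟨Pi.single i a + Pi.single j b + Pi.single k c, fun l ↦ ?_, ?_, ?_⟩
  · obtain rfl | hli := eq_or_ne l i
    · simpa [hij, hik] using ha
    obtain rfl | hlj := eq_or_ne l j
    · simpa [hli, hjk] using hb
    obtain rfl | hlk := eq_or_ne l k
    · simpa [hli, hlj] using hc
    · simpa [hli, hlj, hlk] using IsDerivValue.zero ha.nonneg
  · simpa [Finset.sum_add_distrib] using hsum
  · rw [not_and_or] at hindep
    obtain h | h := hindep
    · exact ⟨i, j, by simpa [hij, hij.symm, hik, hjk] using h⟩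
    · exact ⟨i, k, by simpa [hij, hik, hik.symm, hjk.symm] using h⟩

lemma of_two (hij : i ≠ j) (hik : i ≠ k) (hjk : j ≠ k) (hk : n k ≠ 0) {d : ℤ} (hd : d ≠ 0)
    (hi : IsDerivValue (n i) d X) (hj : IsDerivValue (n j) (-d) X) :
    HasSmallIndepDeriv n X :=
  of_three hij hik hjk hi hj (.zero hi.nonneg) (by ring) fun h ↦ by simp_all

lemma exists_memT {a b : ℕ} (hab : a.Coprime b)
    (h : HasSmallIndepDeriv ![(a : ℤ), b, -(a + b)] X) :
    ∃ ψ, MemT a b ψ ∧ Wpsi ψ a b ≠ 0 ∧ dNorm ψ ≤ X := by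
  obtain ⟨d, hd, hsum, hindep⟩ := h
  obtain ⟨ψ, hsupp, hψ, hval⟩ :=
    exists_derivation_of_isDerivValue (hd 0).nonneg
      (pairwise_isCoprime_triple (Nat.isCoprime_iff_coprime.mpr hab)) hd
  have hval₀ : dpsi ψ a = d 0 := hval 0
  have hval₁ : dpsi ψ b = d 1 := hval 1
  have hval₂ : -dpsi ψ (a + b) = d 2 := by rw [← dpsi_neg]; exact hval 2
  rw [Fin.sum_univ_three] at hsum
  refine ⟨ψ, ⟨⟨fun p hp ↦ hsupp p fun i hi ↦ hp (Nat.prime_of_mem_primeFactors hi), ⌊X⌋,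
    fun p ↦ Int.le_floor.mpr (mod_cast hψ p)⟩, fun p _ hp ↦ hsupp p fun i hi ↦ ?_, ?_⟩,
    fun hW ↦ ?_, ciSup_le hψ⟩
  · have hdvd : (p : ℤ) ∣ ![(a : ℤ), b, -(a + b)] i :=
      Int.natCast_dvd.mpr (Nat.dvd_of_mem_primeFactors hi)
    apply hp
    zify
    fin_cases i
    · exact (hdvd.mul_right _).mul_right _
    · exact (hdvd.mul_left _).mul_right _
    · exact ((dvd_neg.mp hdvd).mul_left _)
  · linarith
  · obtain ⟨i, j, hne⟩ := hindep
    rw [Wpsi, hval₀, hval₁] at hW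
    have hd₂ : d 2 = -d 0 - d 1 := by linarith
    apply hne
    fin_cases i <;> fin_cases j <;> simp [hd₂] <;> linarith

end HasSmallIndepDeriv

/-! ### Small solutions of linear equations -/

/-- Pigeonhole: the linear form maps the box `∏ [0, X i]` into an interval with fewer points. -/
lemma exists_ne_zero_sum_mul_eq_zero {ι : Type*} [Fintype ι] {a : ι → ℤ} {X : ι → ℕ}
    (h : ∑ i, |a i| * X i + 1 < ∏ i, ((X i : ℤ) + 1)) :
    ∃ t : ι → ℤ, t ≠ 0 ∧ (∀ i, |t i| ≤ X i) ∧ ∑ i, a i * t i = 0 := by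
  classical
  let box : Finset (ι → ℤ) := Fintype.piFinset fun i ↦ Finset.Icc 0 (X i : ℤ)
  let target : Finset ℤ := Finset.Icc (∑ i, min (a i) 0 * X i) (∑ i, max (a i) 0 * X i)
  have hmaps : Set.MapsTo (fun t ↦ ∑ i, a i * t i) (box : Set (ι → ℤ)) target := by
    intro t ht
    have ht (i) : 0 ≤ t i ∧ t i ≤ X i := Finset.mem_Icc.mp (Fintype.mem_piFinset.mp ht i)
    refine Finset.mem_coe.mpr (Finset.mem_Icc.mpr
      ⟨Finset.sum_le_sum fun i _ ↦ ?_, Finset.sum_le_sum fun i _ ↦ ?_⟩)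
    · exact (mul_le_mul_of_nonpos_left (ht i).2 (min_le_right _ _)).trans
        (mul_le_mul_of_nonneg_right (min_le_left _ _) (ht i).1)
    · exact (mul_le_mul_of_nonneg_right (le_max_left _ _) (ht i).1).trans
        (mul_le_mul_of_nonneg_left (ht i).2 (le_max_right _ _))
  have hwidth : ∑ i, max (a i) 0 * X i - ∑ i, min (a i) 0 * X i = ∑ i, |a i| * (X i : ℤ) := by
    rw [← Finset.sum_sub_distrib]
    refine Finset.sum_congr rfl fun i _ ↦ ?_
    rw [← sub_mul, max_sub_min_eq_abs', sub_zero]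
  have hcard : target.card < box.card := by
    have hbox : (box.card : ℤ) = ∏ i, ((X i : ℤ) + 1) := by simp [box]
    have hsum : 0 ≤ ∑ i, |a i| * (X i : ℤ) := Finset.sum_nonneg fun i _ ↦ by positivity
    rw [Int.card_Icc]
    omega
  obtain ⟨t, ht, u, hu, hne, heq⟩ := Finset.exists_ne_map_eq_of_card_lt_of_maps_to hcard hmaps
  refine ⟨t - u, sub_ne_zero.mpr hne, fun i ↦ ?_, ?_⟩
  · have ht := Finset.mem_Icc.mp (Fintype.mem_piFinset.mp ht i)
    have hu := Finset.mem_Icc.mp (Fintype.mem_piFinset.mp hu i)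
    rw [Pi.sub_apply, abs_le]
    omega
  · simp only [Pi.sub_apply, mul_sub, Finset.sum_sub_distrib]
    exact sub_eq_zero.mpr heq

lemma exists_small_solution {L : ℝ} (hL : 4 ≤ L) {m : ℕ} (hm : 4 ≤ m) {A B C : ℤ}
    (hA : (|A| : ℝ) ≤ L ^ (m + 3)) (hB : (|B| : ℝ) ≤ L ^ (m + 3))
    (hC : (|C| : ℝ) ≤ L ^ (m + 3)) :
    ∃ x y z : ℤ, ¬(x = 0 ∧ y = 0 ∧ z = 0) ∧ (|x| : ℝ) ≤ L ^ m ∧ (|y| : ℝ) ≤ L ^ m ∧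
      (|z| : ℝ) ≤ L ^ 4 ∧ x * A + y * B + z * C = 0 := by
  have hX : (⌊L ^ m⌋₊ : ℝ) ≤ L ^ m := Nat.floor_le (by positivity)
  have hZ : (⌊L ^ 4⌋₊ : ℝ) ≤ L ^ 4 := Nat.floor_le (by positivity)
  have hZX : L ^ 4 ≤ L ^ m := pow_le_pow_right₀ (by linarith) hm
  have hbox : (|A| : ℝ) * ⌊L ^ m⌋₊ + (|B| : ℝ) * ⌊L ^ m⌋₊ + (|C| : ℝ) * ⌊L ^ 4⌋₊ + 1 <
      (⌊L ^ m⌋₊ + 1) * (⌊L ^ m⌋₊ + 1) * (⌊L ^ 4⌋₊ + 1) :=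
    calc (|A| : ℝ) * ⌊L ^ m⌋₊ + (|B| : ℝ) * ⌊L ^ m⌋₊ + (|C| : ℝ) * ⌊L ^ 4⌋₊ + 1
        ≤ L ^ (m + 3) * L ^ m + L ^ (m + 3) * L ^ m + L ^ (m + 3) * L ^ m +
            L ^ (m + 3) * L ^ m := by
          gcongr
          · exact hZ.trans hZX
          · rw [← pow_add]
            exact one_le_pow₀ (by linarith)
      _ = 4 * (L ^ m * L ^ m * L ^ 3) := by ring
      _ ≤ L * (L ^ m * L ^ m * L ^ 3) := by gcongr
      _ = L ^ m * L ^ m * L ^ 4 := by ring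
      _ < _ := by gcongr <;> exact Nat.lt_floor_add_one _
  obtain ⟨t, ht_ne, ht, hsum⟩ := exists_ne_zero_sum_mul_eq_zero (a := ![A, B, C])
    (X := ![⌊L ^ m⌋₊, ⌊L ^ m⌋₊, ⌊L ^ 4⌋₊]) (by
      rw [Fin.sum_univ_three, Fin.prod_univ_three]
      exact_mod_cast hbox)
  have ht_real (i) : (|t i| : ℝ) ≤ ((![⌊L ^ m⌋₊, ⌊L ^ m⌋₊, ⌊L ^ 4⌋₊] i : ℕ) : ℝ) :=
    mod_cast ht i
  refine ⟨t 0, t 1, t 2, fun ⟨h₀, h₁, h₂⟩ ↦ ht_ne ?_, (ht_real 0).trans hX,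
    (ht_real 1).trans hX, (ht_real 2).trans hZ, ?_⟩
  · ext i
    fin_cases i <;> assumption
  · simpa [Fin.sum_univ_three, mul_comm] using hsum

lemma eq_zero_of_mul_eq_mul {s p a b : ℤ} (hsp : IsCoprime s p) (heq : s * a = p * b)
    (hb : |b| < s) : a = 0 ∧ b = 0 := by
  obtain rfl : b = 0 :=
    Int.eq_zero_of_abs_lt_dvd (hsp.dvd_of_dvd_mul_left (Dvd.intro a heq)) hb
  simpa [((abs_nonneg _).trans_lt hb).ne'] using heq

lemma eq_zero_of_derivCoeff_proportional {m n x z : ℤ} {p s : ℕ}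
    (hp : p ∈ m.natAbs.primeFactors) (hs : s ∈ n.natAbs.primeFactors) (hps : p ≠ s)
    (h : n * (x * derivCoeff m p) = m * (z * derivCoeff n s))
    (hz : |z| * n.natAbs.factorization s < s) : x = 0 ∧ z = 0 := by
  have hm : m ≠ 0 := by rintro rfl; simp at hp
  have hn : n ≠ 0 := by rintro rfl; simp at hs
  have hcop : IsCoprime (s : ℤ) p := Nat.isCoprime_iff_coprime.mpr <|
    (Nat.coprime_primes (Nat.prime_of_mem_primeFactors hs)
      (Nat.prime_of_mem_primeFactors hp)).mpr hps.symm
  have hcancel : (s : ℤ) * (x * m.natAbs.factorization p) = p * (z * n.natAbs.factorization s) := by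
    refine mul_left_cancel₀ (mul_ne_zero hm hn) ?_
    linear_combination p * s * h - n * x * s * derivCoeff_mul_self m p +
      m * z * p * derivCoeff_mul_self n s
  have hzero := eq_zero_of_mul_eq_mul hcop hcancel (by simpa [abs_mul] using hz)
  have hvp : m.natAbs.factorization p ≠ 0 :=
    factorization_eq_zero_iff_notMem_primeFactors.not_left.mpr hp
  have hvs : n.natAbs.factorization s ≠ 0 :=
    factorization_eq_zero_iff_notMem_primeFactors.not_left.mpr hs
  simpa [hvp, hvs] using hzero

/-! ### Partial fractions along the tame primes -/

section PartialFractions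

variable {ι : Type*} [DecidableEq ι] {s : Finset ι} {m v : ι → ℤ}

lemma exists_partial_fractions (hpos : ∀ i ∈ s, 0 < m i)
    (hm : (s : Set ι).Pairwise fun i j ↦ IsCoprime (m i) (m j))
    (hv : ∀ i ∈ s, IsCoprime (v i) (m i)) (B : ℤ) :
    ∃ (φ : ι → ℤ) (M : ℤ), (∀ i ∈ s, 0 ≤ φ i ∧ φ i < m i) ∧
      B = (∏ i ∈ s, m i) * M + ∑ i ∈ s, φ i * (v i * ∏ j ∈ s.erase i, m j) := by
  have hinv (i) : ∃ u : ℤ, i ∈ s → m i ∣ 1 - u * (v i * ∏ j ∈ s.erase i, m j) := by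
    by_cases hi : i ∈ s
    · have hcop : IsCoprime (v i * ∏ j ∈ s.erase i, m j) (m i) :=
        (hv i hi).mul_left <| IsCoprime.prod_left fun j hj ↦
          hm (Finset.mem_of_mem_erase hj) hi (Finset.ne_of_mem_erase hj)
      obtain ⟨u, w, huw⟩ := hcop
      exact ⟨u, fun _ ↦ ⟨w, by linear_combination -huw⟩⟩
    · exact ⟨0, fun h ↦ absurd h hi⟩
  choose u hu using hinv
  have hdvd : ∏ i ∈ s, m i ∣
      B - ∑ i ∈ s, B * u i % m i * (v i * ∏ j ∈ s.erase i, m j) := by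
    refine Finset.prod_dvd_of_coprime hm fun i hi ↦ ?_
    rw [← Finset.add_sum_erase s _ hi, ← sub_sub]
    refine dvd_sub ?_ (Finset.dvd_sum fun j hj ↦ ?_)
    · obtain ⟨c, hc⟩ := hu i hi
      refine ⟨B * c + B * u i / m i * (v i * ∏ j ∈ s.erase i, m j), ?_⟩
      linear_combination B * hc -
        (v i * ∏ j ∈ s.erase i, m j) * Int.mul_ediv_add_emod (B * u i) (m i)
    · have hij : i ∈ s.erase j := Finset.mem_erase.mpr ⟨(Finset.ne_of_mem_erase hj).symm, hi⟩
      exact ((Finset.dvd_prod_of_mem m hij).mul_left _).mul_left _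
  obtain ⟨M, hM⟩ := hdvd
  exact ⟨fun i ↦ B * u i % m i, M, fun i hi ↦
    ⟨Int.emod_nonneg _ (hpos i hi).ne', Int.emod_lt_of_pos _ (hpos i hi)⟩,
    by linear_combination hM⟩

lemma prod_mul_abs_le_of_partial_fractions {φ : ι → ℤ} {B M : ℤ}
    (hφ : ∀ i ∈ s, 0 ≤ φ i ∧ φ i < m i)
    (hB : B = (∏ i ∈ s, m i) * M + ∑ i ∈ s, φ i * (v i * ∏ j ∈ s.erase i, m j)) :
    (∏ i ∈ s, m i) * |M| ≤ |B| + (∏ i ∈ s, m i) * ∑ i ∈ s, |v i| := by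
  have hnonneg (i) (hi : i ∈ s) : 0 ≤ m i := (hφ i hi).1.trans (hφ i hi).2.le
  have hterm (i) (hi : i ∈ s) : |φ i * (v i * ∏ j ∈ s.erase i, m j)| ≤
      (∏ i ∈ s, m i) * |v i| := by
    have herase : 0 ≤ ∏ j ∈ s.erase i, m j :=
      Finset.prod_nonneg fun j hj ↦ hnonneg j (Finset.mem_of_mem_erase hj)
    rw [abs_mul, abs_mul, abs_of_nonneg (hφ i hi).1, abs_of_nonneg herase,
      ← Finset.mul_prod_erase s m hi, mul_assoc, mul_comm |v i|]
    gcongr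
    exact (hφ i hi).2.le
  calc (∏ i ∈ s, m i) * |M| = |B - ∑ i ∈ s, φ i * (v i * ∏ j ∈ s.erase i, m j)| := by
        rw [hB, add_sub_cancel_right, abs_mul, abs_of_nonneg (Finset.prod_nonneg hnonneg)]
    _ ≤ |B| + |∑ i ∈ s, φ i * (v i * ∏ j ∈ s.erase i, m j)| := abs_sub _ _
    _ ≤ |B| + (∏ i ∈ s, m i) * ∑ i ∈ s, |v i| := by
        rw [Finset.mul_sum]
        gcongr
        exact (Finset.abs_sum_le_sum_abs _ _).trans (Finset.sum_le_sum hterm)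

end PartialFractions

/-- The primes `p` of `n` that do not divide their exponent `v_p(n)`; these are the primes `p` for
which `v_p(n)` is invertible modulo `p`. -/
def tamePrimes (n : ℕ) : Finset ℕ := {p ∈ n.primeFactors | ¬ p ∣ n.factorization p}

/-- The part of the radical of `n` coming from the tame primes. -/
def tameRad (n : ℕ) : ℕ := ∏ p ∈ tamePrimes n, p

lemma tamePrimes_subset (n : ℕ) : tamePrimes n ⊆ n.primeFactors :=
  Finset.filter_subset _ _

lemma tameRad_pos (n : ℕ) : 0 < tameRad n :=
  Finset.prod_pos fun _ hp ↦ Nat.pos_of_mem_primeFactors (tamePrimes_subset n hp)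

lemma tameRad_dvd (n : ℕ) : tameRad n ∣ n :=
  (Finset.prod_dvd_prod_of_subset _ _ _ (tamePrimes_subset n)).trans n.prod_primeFactors_dvd

lemma ediv_tameRad_mul_self (n : ℤ) : n / tameRad n.natAbs * tameRad n.natAbs = n :=
  Int.ediv_mul_cancel (Int.natCast_dvd.mpr (tameRad_dvd _))

lemma abs_ediv_tameRad_mul_self (n : ℤ) :
    |((n / tameRad n.natAbs : ℤ) : ℝ)| * tameRad n.natAbs = |(n : ℝ)| := by
  conv_rhs => rw [← ediv_tameRad_mul_self n]
  push_cast [abs_mul, Nat.abs_cast]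
  rfl

lemma ediv_tameRad_mul_prod_erase {n : ℤ} {p : ℕ}
    (hp : p ∈ tamePrimes n.natAbs) :
    n / tameRad n.natAbs *
      (n.natAbs.factorization p * ∏ q ∈ (tamePrimes n.natAbs).erase p, (q : ℤ)) =
        derivCoeff n p := by
  have hp₀ : p ≠ 0 := (Nat.pos_of_mem_primeFactors (tamePrimes_subset _ hp)).ne'
  refine mul_right_cancel₀ (Int.natCast_ne_zero.mpr hp₀) ?_
  have herase : p * ∏ q ∈ (tamePrimes n.natAbs).erase p, (q : ℤ) = tameRad n.natAbs := by
    rw [Finset.mul_prod_erase _ (fun q : ℕ ↦ (q : ℤ)) hp, tameRad, Nat.cast_prod]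
  rw [derivCoeff_mul_self]
  linear_combination n / tameRad n.natAbs * n.natAbs.factorization p * herase +
    n.natAbs.factorization p * ediv_tameRad_mul_self n

/-- A prime `p ∣ v_p(n)` with `p > T` has `v_p(n) > T`, so that `p ^ T` divides `n`. -/
lemma radN_pow_le_primorial_mul_tameRad {n : ℕ} (hn : n ≠ 0) (T : ℕ) :
    radN n ^ T ≤ primorial T ^ T * n * tameRad n ^ T := by
  have hterm (p) (hp : p ∈ n.primeFactors.filter fun p ↦ p ∣ n.factorization p) :
      p ^ T ≤ (if p ≤ T then p else 1) ^ T * p ^ n.factorization p := by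
    obtain ⟨hp_mem, hp_dvd⟩ := Finset.mem_filter.mp hp
    have hp_pos := Nat.pos_of_mem_primeFactors hp_mem
    split_ifs with hpT
    · exact Nat.le_mul_of_pos_right _ (by positivity)
    · rw [one_pow, one_mul]
      have hv : n.factorization p ≠ 0 :=
        factorization_eq_zero_iff_notMem_primeFactors.not_left.mpr hp_mem
      exact Nat.pow_le_pow_right hp_pos
        ((not_le.mp hpT).le.trans (Nat.le_of_dvd (Nat.pos_of_ne_zero hv) hp_dvd))
  have hsmall : ∏ p ∈ n.primeFactors with p ∣ n.factorization p, (if p ≤ T then p else 1) ≤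
      primorial T := by
    rw [← Finset.prod_filter]
    refine Finset.prod_le_prod_of_subset_of_one_le' (fun p hp ↦ ?_) fun p hp _ ↦
      (Finset.mem_filter.mp hp).2.one_le
    simp only [Finset.mem_filter, Finset.mem_range, Nat.lt_succ_iff] at hp ⊢
    exact ⟨hp.2, Nat.prime_of_mem_primeFactors hp.1.1⟩
  have hlarge : ∏ p ∈ n.primeFactors with p ∣ n.factorization p, p ^ n.factorization p ≤ n := by
    conv_rhs => rw [← Nat.prod_factorization_pow_eq_self hn]
    exact Finset.prod_le_prod_of_subset_of_one_le' (Finset.filter_subset _ _)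
      fun p hp _ ↦ Nat.pow_pos (Nat.pos_of_mem_primeFactors hp)
  rw [radN, ← Finset.prod_filter_mul_prod_filter_not _ (fun p ↦ p ∣ n.factorization p),
    ← tamePrimes, ← tameRad, mul_pow, ← Finset.prod_pow]
  gcongr
  calc _ ≤ _ := Finset.prod_le_prod' hterm
    _ ≤ _ := by
      rw [Finset.prod_mul_distrib, Finset.prod_pow]
      gcongr

lemma exists_tame_decomposition (n B : ℤ) :
    ∃ (φ : ℕ → ℤ) (M : ℤ),
      (∀ p ∈ tamePrimes n.natAbs, 0 ≤ φ p ∧ φ p < p) ∧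
      n / tameRad n.natAbs * B = n * M + ∑ p ∈ tamePrimes n.natAbs, φ p * derivCoeff n p ∧
      tameRad n.natAbs * |M| ≤
        |B| + tameRad n.natAbs * ArithmeticFunction.cardFactors n.natAbs := by
  set v := n.natAbs.factorization
  have hprime {p : ℕ} (hp : p ∈ tamePrimes n.natAbs) : p.Prime :=
    Nat.prime_of_mem_primeFactors (tamePrimes_subset _ hp)
  obtain ⟨φ, M, hφ, hB⟩ := exists_partial_fractions (s := tamePrimes n.natAbs)
    (m := fun p ↦ (p : ℤ)) (v := fun p ↦ (v p : ℤ)) (fun p hp ↦ mod_cast (hprime hp).pos)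
    (fun p hp q hq hpq ↦ Nat.isCoprime_iff_coprime.mpr <|
      (Nat.coprime_primes (hprime hp) (hprime hq)).mpr hpq)
    (fun p hp ↦ (Nat.isCoprime_iff_coprime.mpr <|
      (hprime hp).coprime_iff_not_dvd.mpr (Finset.mem_filter.mp hp).2).symm) B
  have hM := prod_mul_abs_le_of_partial_fractions hφ hB
  rw [← Nat.cast_prod, ← tameRad] at hB hM
  refine ⟨φ, M, hφ, ?_, ?_⟩
  · rw [← Finset.sum_congr rfl fun p hp ↦ congrArg (φ p * ·) (ediv_tameRad_mul_prod_erase hp)]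
    simp only [mul_left_comm (φ _) (n / (tameRad n.natAbs : ℤ)), ← Finset.mul_sum]
    linear_combination n / tameRad n.natAbs * hB + M * ediv_tameRad_mul_self n
  · refine hM.trans ?_
    rw [ArithmeticFunction.cardFactors_eq_sum_factorization, Finsupp.sum,
      Nat.support_factorization]
    push_cast
    gcongr
    simp only [Nat.abs_cast]
    exact Finset.sum_le_sum_of_subset_of_nonneg (tamePrimes_subset _)
      fun _ _ _ ↦ Nat.cast_nonneg _

lemma exists_isDerivValue_mul {n : ℤ} (hn : n.natAbs ≠ 1) (hn₀ : n ≠ 0) {S : ℝ}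
    (hS : ∀ p ∈ n.natAbs.primeFactors, (p : ℝ) ≤ S) :
    ∃ m : ℤ, m ≠ 0 ∧
      (|m| : ℝ) * tameRad n.natAbs ≤ ArithmeticFunction.cardFactors n.natAbs * |(n : ℝ)| ∧
      ∀ B : ℤ, IsDerivValue n (m * B)
        (S * (|(B : ℝ)| / tameRad n.natAbs + 2 * ArithmeticFunction.cardFactors n.natAbs)) := by
  obtain ⟨q, hq⟩ : n.natAbs.primeFactors.Nonempty := Nat.nonempty_primeFactors.mpr (by omega)
  set v := n.natAbs.factorization q
  set P := tameRad n.natAbs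
  set Ω := ArithmeticFunction.cardFactors n.natAbs
  have hP_pos : 0 < (P : ℝ) := mod_cast tameRad_pos _
  have hvΩ : (v : ℝ) ≤ Ω := mod_cast factorization_le_cardFactors _ q
  have hv₀ : v ≠ 0 := factorization_eq_zero_iff_notMem_primeFactors.not_left.mpr hq
  have hS₀ : 0 ≤ S := (Nat.cast_nonneg q).trans (hS q hq)
  refine ⟨v * (n / P), mul_ne_zero (Int.natCast_ne_zero.mpr hv₀) (left_ne_zero_of_mul
    ((ediv_tameRad_mul_self n).trans_ne hn₀)), ?_, fun B ↦ ?_⟩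
  · push_cast [abs_mul, Nat.abs_cast]
    rw [mul_assoc, abs_ediv_tameRad_mul_self]
    gcongr
  · obtain ⟨φ, M, hφ, hdecomp, hM⟩ := exists_tame_decomposition n B
    have hM_real : |(M : ℝ)| ≤ |(B : ℝ)| / P + Ω := by
      rw [div_add' _ _ _ hP_pos.ne', le_div_iff₀ hP_pos, mul_comm, mul_comm (Ω : ℝ)]
      exact_mod_cast hM
    have htame := IsDerivValue.sum_mul_derivCoeff (n := n) (X := S * Ω)
      (x := fun p ↦ v * φ p) (tamePrimes_subset _) (by positivity) fun p hp ↦ by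
        push_cast [abs_mul, Nat.abs_cast]
        rw [mul_comm, abs_of_nonneg (mod_cast (hφ p hp).1)]
        gcongr
        exact (mod_cast (hφ p hp).2.le : (φ p : ℝ) ≤ p).trans
          (hS p (tamePrimes_subset _ hp))
    have hcorrection := IsDerivValue.mul_derivCoeff (X := S * (|(B : ℝ)| / P + Ω))
      (x := q * M) hq (by
        push_cast [abs_mul, Nat.abs_cast]
        gcongr
        exact hS q hq)
    convert hcorrection.add htame using 1
    · simp only [mul_assoc, ← Finset.mul_sum]
      linear_combination v * hdecomp - M * derivCoeff_mul_self n q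
    · ring

/-! ### Triples of bounded height -/

lemma two_pow_cardFactors_le {n : ℕ} (hn : n ≠ 0) : 2 ^ ArithmeticFunction.cardFactors n ≤ n := by
  conv_rhs => rw [← Nat.prod_primeFactorsList hn]
  exact List.pow_card_le_prod _ _ fun p hp ↦ (Nat.prime_of_mem_primeFactorsList hp).two_le

/-- `L` is a convenient unit for measuring integers up to `L ^ K`: exponents of prime powers below
this bound, as well as the constants depending on `K` that arise, are at most `L`. -/
structure IsScale (K : ℕ) (L : ℝ) : Prop where
  eight_le : 8 ≤ L
  primorial_le : (primorial K : ℝ) ≤ L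
  le_of_two_pow_le : ∀ e : ℕ, (2 : ℝ) ^ e ≤ L ^ K → (e : ℝ) ≤ L

namespace IsScale

variable {K : ℕ} {L : ℝ} {n : ℤ}

lemma pos (h : IsScale K L) : 0 < L := by linarith [h.eight_le]

lemma one_le (h : IsScale K L) : 1 ≤ L := by linarith [h.eight_le]

lemma cardFactors_le (h : IsScale K L) (hn₀ : n ≠ 0) (hn : |(n : ℝ)| ≤ L ^ K) :
    (ArithmeticFunction.cardFactors n.natAbs : ℝ) ≤ L := by
  refine h.le_of_two_pow_le _ (le_trans ?_ hn)
  rw [← Int.cast_abs, ← Nat.cast_natAbs]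
  exact_mod_cast two_pow_cardFactors_le (Int.natAbs_ne_zero.mpr hn₀)

lemma factorization_le (h : IsScale K L) (hn₀ : n ≠ 0) (hn : |(n : ℝ)| ≤ L ^ K) (p : ℕ) :
    (n.natAbs.factorization p : ℝ) ≤ L :=
  (Nat.cast_le.mpr (factorization_le_cardFactors _ p)).trans (h.cardFactors_le hn₀ hn)

lemma abs_derivCoeff_mul_le (h : IsScale K L) (hn₀ : n ≠ 0) (hn : |(n : ℝ)| ≤ L ^ K) (p : ℕ) :
    |(derivCoeff n p : ℝ)| * p ≤ L ^ (K + 1) :=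
  calc |(derivCoeff n p : ℝ)| * p = |(n : ℝ)| * n.natAbs.factorization p := by
        rw [← Nat.abs_cast p, ← abs_mul, ← Nat.abs_cast (n.natAbs.factorization p), ← abs_mul]
        exact_mod_cast congrArg abs (derivCoeff_mul_self n p)
    _ ≤ L ^ K * L := by
        have := h.pos
        gcongr
        exact h.factorization_le hn₀ hn p
    _ = L ^ (K + 1) := (pow_succ L K).symm

lemma abs_derivCoeff_le (h : IsScale K L) (hn₀ : n ≠ 0) (hn : |(n : ℝ)| ≤ L ^ K) (p : ℕ) :
    |(derivCoeff n p : ℝ)| ≤ L ^ (K + 1) := by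
  by_cases hp : p ∈ n.natAbs.primeFactors
  · exact (le_mul_of_one_le_right (abs_nonneg _)
      (mod_cast Nat.pos_of_mem_primeFactors hp)).trans (h.abs_derivCoeff_mul_le hn₀ hn p)
  · simpa [derivCoeff_eq_zero hp] using pow_nonneg h.pos.le _

lemma radN_le (h : IsScale K L) (hK : K ≠ 0) (hn₀ : n ≠ 0) (hn : |(n : ℝ)| ≤ L ^ K) :
    (radN n.natAbs : ℝ) ≤ L ^ 2 * tameRad n.natAbs := by
  have hL := h.pos
  refine (pow_le_pow_iff_left₀ (by positivity) (by positivity) hK).mp ?_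
  calc (radN n.natAbs : ℝ) ^ K
      ≤ primorial K ^ K * |(n : ℝ)| * tameRad n.natAbs ^ K := by
        rw [← Int.cast_abs, ← Nat.cast_natAbs]
        exact_mod_cast radN_pow_le_primorial_mul_tameRad (Int.natAbs_ne_zero.mpr hn₀) K
    _ ≤ L ^ K * L ^ K * tameRad n.natAbs ^ K := by
        gcongr
        exact h.primorial_le
    _ = (L ^ 2 * tameRad n.natAbs) ^ K := by ring

lemma exists_small_relation {ι : Type*} {n : ι → ℤ} {i j k : ι} {m p q s : ℕ}
    (h : IsScale (m + 2) L) (hm : 4 ≤ m) (hn₀ : ∀ i, n i ≠ 0)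
    (hn : ∀ i, |(n i : ℝ)| ≤ L ^ (m + 2)) (hsL : L ^ 5 < s) :
    ∃ x y z : ℤ, ¬(x = 0 ∧ y = 0 ∧ z = 0) ∧ (|x| : ℝ) ≤ L ^ m ∧ (|y| : ℝ) ≤ L ^ m ∧
      (|z| : ℝ) ≤ L ^ m ∧ |z| * (n i).natAbs.factorization s < s ∧
      x * derivCoeff (n j) p + y * derivCoeff (n k) q + z * derivCoeff (n i) s = 0 := by
  have hL := h.pos
  obtain ⟨x, y, z, hne, hx, hy, hz, hsum⟩ := exists_small_solution (by linarith [h.eight_le]) hm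
    (h.abs_derivCoeff_le (hn₀ j) (hn j) p) (h.abs_derivCoeff_le (hn₀ k) (hn k) q)
    (h.abs_derivCoeff_le (hn₀ i) (hn i) s)
  refine ⟨x, y, z, hne, hx, hy, hz.trans (pow_le_pow_right₀ h.one_le hm), ?_, hsum⟩
  have hzs : (|z| : ℝ) * (n i).natAbs.factorization s < s :=
    calc (|z| : ℝ) * (n i).natAbs.factorization s ≤ L ^ 4 * L := by
          gcongr
          exact h.factorization_le (hn₀ i) (hn i) s
      _ = L ^ 5 := (pow_succ L 4).symm
      _ < s := hsL
  exact_mod_cast hzs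

lemma exists_small_isDerivValue_mul {m : ℕ} (h : IsScale (m + 2) L) (hm : 7 ≤ m) (hn₀ : n ≠ 0)
    (hn : |(n : ℝ)| ≤ L ^ (m + 2)) (hsmall : ∀ r ∈ n.natAbs.primeFactors, (r : ℝ) ≤ L ^ 5)
    (hrad : L ^ 11 ≤ (radN n.natAbs : ℝ)) :
    ∃ μ : ℤ, μ ≠ 0 ∧ (|μ| : ℝ) ≤ L ^ m ∧
      ∀ B : ℤ, (|B| : ℝ) ≤ L ^ (m + 3) → IsDerivValue n (μ * B) (L ^ m) := by
  have hL := h.pos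
  have htame : L ^ 9 ≤ (tameRad n.natAbs : ℝ) := by
    refine le_of_mul_le_mul_left ?_ (pow_pos hL 2)
    calc L ^ 2 * L ^ 9 = L ^ 11 := by ring
      _ ≤ _ := hrad.trans (h.radN_le (by omega) hn₀ hn)
  have hΩ := h.cardFactors_le hn₀ hn
  have hunit : n.natAbs ≠ 1 := by
    intro hone
    have hL11 : (1 : ℝ) < L ^ 11 := one_lt_pow₀ (by linarith [h.eight_le]) (by norm_num)
    rw [hone, radN, Nat.primeFactors_one, Finset.prod_empty, Nat.cast_one] at hrad
    exact hL11.not_ge hrad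
  obtain ⟨μ, hμ₀, hμ, hval⟩ := exists_isDerivValue_mul hunit hn₀ hsmall
  have hμL : |(μ : ℝ)| ≤ L ^ m := by
    refine le_of_mul_le_mul_right ?_ (pow_pos hL 9)
    calc |(μ : ℝ)| * L ^ 9 ≤ |(μ : ℝ)| * tameRad n.natAbs := by gcongr
      _ ≤ L * L ^ (m + 2) := hμ.trans (by gcongr)
      _ = L ^ (m + 3) := by ring
      _ ≤ L ^ (m + 9) := pow_le_pow_right₀ h.one_le (by omega)
      _ = L ^ m * L ^ 9 := pow_add L m 9
  refine ⟨μ, hμ₀, hμL, fun B hB ↦ (hval B).mono ?_⟩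
  obtain ⟨t, rfl⟩ := Nat.exists_eq_add_of_le' hm
  calc _ ≤ L ^ 5 * (L ^ (t + 7 + 3) / L ^ 9 + 2 * L) := by
        gcongr
    _ = L ^ (t + 6) + 2 * L ^ 6 := by field_simp; ring
    _ ≤ L ^ (t + 6) + 2 * L ^ (t + 6) := by
        gcongr
        · exact h.one_le
        · omega
    _ ≤ L * L ^ (t + 6) := by nlinarith [h.eight_le, pow_pos hL (t + 6)]
    _ = L ^ (t + 7) := by ring

end IsScale

lemma sq_le_of_primeFactors_eq_singleton {n p : ℕ} (h : n.primeFactors = {p}) (hn : ¬ n.Prime) :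
    p ^ 2 ≤ n := by
  have hn₀ : n ≠ 0 := by rintro rfl; simp at h
  have hp : p.Prime := Nat.prime_of_mem_primeFactors (h ▸ Finset.mem_singleton_self p)
  have hpow : p ^ n.factorization p = n := by
    conv_rhs => rw [← Nat.prod_factorization_pow_eq_self hn₀]
    rw [Finsupp.prod, Nat.support_factorization, h, Finset.prod_singleton]
  have hv₀ : n.factorization p ≠ 0 :=
    factorization_eq_zero_iff_notMem_primeFactors.not_left.mpr (h ▸ Finset.mem_singleton_self p)
  have hv₁ : n.factorization p ≠ 1 := fun hv ↦ hn (by rwa [← hpow, hv, pow_one])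
  calc p ^ 2 ≤ p ^ n.factorization p := Nat.pow_le_pow_right hp.pos (by omega)
    _ = n := hpow

lemma radN_pos (n : ℕ) : 0 < radN n :=
  Finset.prod_pos fun _ hp ↦ Nat.pos_of_mem_primeFactors hp

lemma radN_le {n : ℕ} (hn : n ≠ 0) : radN n ≤ n :=
  Nat.le_of_dvd (Nat.pos_of_ne_zero hn) n.prod_primeFactors_dvd

namespace HasSmallIndepDeriv

variable {ι : Type*} [Fintype ι] {n : ι → ℤ} {i j k : ι} {m : ℕ} {L : ℝ} {p q s : ℕ}

lemma of_large_prime_of_primes (h : IsScale (m + 2) L) (hm : 4 ≤ m)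
    (hn₀ : ∀ i, n i ≠ 0) (hn : ∀ i, |(n i : ℝ)| ≤ L ^ (m + 2)) (hij : i ≠ j) (hik : i ≠ k)
    (hjk : j ≠ k) (hs : s ∈ (n i).natAbs.primeFactors) (hp : p ∈ (n j).natAbs.primeFactors)
    (hq : q ∈ (n k).natAbs.primeFactors) (hps : p ≠ s) (hqs : q ≠ s) (hsL : L ^ 5 < s) :
    HasSmallIndepDeriv n (L ^ m) := by
  obtain ⟨x, y, z, hne, hx, hy, hz, hzs, hsum⟩ :=
    h.exists_small_relation (i := i) (j := j) (k := k) (p := p) (q := q) hm hn₀ hn hsL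
  refine of_three hij hik hjk (.mul_derivCoeff hs hz) (.mul_derivCoeff hp hx)
    (.mul_derivCoeff hq hy) (by linarith) fun ⟨hj, hk⟩ ↦ hne ?_
  obtain ⟨hx₀, hz₀⟩ := eq_zero_of_derivCoeff_proportional hp hs hps hj hzs
  exact ⟨hx₀, (eq_zero_of_derivCoeff_proportional hq hs hqs hk hzs).1, hz₀⟩

lemma of_large_prime_of_second_prime (h : IsScale (m + 2) L) (hm : 4 ≤ m)
    (hn₀ : ∀ i, n i ≠ 0) (hn : ∀ i, |(n i : ℝ)| ≤ L ^ (m + 2)) (hij : i ≠ j) (hik : i ≠ k)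
    (hjk : j ≠ k) (hs : s ∈ (n i).natAbs.primeFactors) (hp : p ∈ (n i).natAbs.primeFactors)
    (hq : q ∈ (n j).natAbs.primeFactors) (hps : p ≠ s) (hsL : L ^ 5 < s) :
    HasSmallIndepDeriv n (L ^ m) := by
  obtain ⟨x, y, z, hne, hx, hy, hz, hzs, hsum⟩ :=
    h.exists_small_relation (i := i) (j := i) (k := j) (p := p) (q := q) hm hn₀ hn hsL
  have hd : IsDerivValue (n i) (x * derivCoeff (n i) p + z * derivCoeff (n i) s) (L ^ m) := by
    simpa [Finset.sum_pair hps, hps] using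
      IsDerivValue.sum_mul_derivCoeff (s := {p, s}) (x := fun r ↦ if r = s then z else x)
        (by simp [Finset.insert_subset_iff, *]) ((abs_nonneg _).trans hx) (by simp [*])
  refine of_two hij hik hjk (hn₀ k) (d := -(y * derivCoeff (n j) q)) (fun hy₀ ↦ hne ?_)
    (by convert hd using 1; linarith) (by simpa using .mul_derivCoeff hq hy)
  have hy₀ : y = 0 := by simpa [derivCoeff_ne_zero hq] using hy₀
  have hprop : n i * (x * derivCoeff (n i) p) = n i * (-z * derivCoeff (n i) s) := by
    rw [hy₀] at hsum
    congr 1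
    linarith
  obtain ⟨hx₀, hz₀⟩ :=
    eq_zero_of_derivCoeff_proportional hp hs hps hprop (by rwa [abs_neg])
  exact ⟨hx₀, hy₀, neg_eq_zero.mp hz₀⟩

lemma of_two_large_primes (h : IsScale (m + 2) L)
    (hn₀ : ∀ i, n i ≠ 0) (hn : ∀ i, |(n i : ℝ)| ≤ L ^ (m + 2)) (hij : i ≠ j) (hik : i ≠ k)
    (hjk : j ≠ k) (hp : p ∈ (n i).natAbs.primeFactors) (hq : q ∈ (n j).natAbs.primeFactors)
    (hpL : L ^ 5 < p) (hqL : L ^ 5 < q) :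
    HasSmallIndepDeriv n (L ^ m) := by
  have hcoeff {i : ι} {p : ℕ} (hpL : L ^ 5 < p) : (|derivCoeff (n i) p| : ℝ) ≤ L ^ m := by
    have hL := h.pos
    refine le_of_mul_le_mul_right ?_ (pow_pos hL 3)
    calc |(derivCoeff (n i) p : ℝ)| * L ^ 3 ≤ |(derivCoeff (n i) p : ℝ)| * p := by
          gcongr
          exact (pow_le_pow_right₀ h.one_le (by norm_num)).trans hpL.le
      _ ≤ L ^ (m + 3) := h.abs_derivCoeff_mul_le (hn₀ i) (hn i) p
      _ = L ^ m * L ^ 3 := pow_add L m 3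
  refine of_two hij hik hjk (hn₀ k) (d := derivCoeff (n j) q * derivCoeff (n i) p)
    (mul_ne_zero (derivCoeff_ne_zero hq) (derivCoeff_ne_zero hp))
    (.mul_derivCoeff hp (hcoeff hqL)) ?_
  rw [mul_comm, ← neg_mul]
  exact .mul_derivCoeff hq (by simpa using hcoeff hpL)

lemma of_small_primes (h : IsScale (m + 2) L) (hm : 7 ≤ m)
    (hn₀ : ∀ i, n i ≠ 0) (hn : ∀ i, |(n i : ℝ)| ≤ L ^ (m + 2)) (hij : i ≠ j) (hik : i ≠ k)
    (hjk : j ≠ k) (hp : p ∈ (n j).natAbs.primeFactors)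
    (hsmall : ∀ r ∈ (n i).natAbs.primeFactors, (r : ℝ) ≤ L ^ 5)
    (hrad : L ^ 11 ≤ (radN (n i).natAbs : ℝ)) :
    HasSmallIndepDeriv n (L ^ m) := by
  obtain ⟨μ, hμ₀, hμ, hval⟩ := h.exists_small_isDerivValue_mul hm (hn₀ i) (hn i) hsmall hrad
  refine of_two hij hik hjk (hn₀ k) (mul_ne_zero hμ₀ (derivCoeff_ne_zero hp))
    (hval _ (h.abs_derivCoeff_le (hn₀ j) (hn j) p)) ?_
  rw [← neg_mul]
  exact .mul_derivCoeff hp (by simpa using hμ)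

/-- If the other cases fail, `n i` is a power of `s`, at least `s ^ 2`, so its radical is at most
the square root of its height and the radical of `n j` must be large. -/
lemma of_large_prime_of_not_prime {l : ℕ} (h : IsScale (2 * l + 2) L) (hl : 4 ≤ l)
    (hn₀ : ∀ i, n i ≠ 0) (hn : ∀ i, |(n i : ℝ)| ≤ L ^ (2 * l + 2)) (hij : i ≠ j) (hik : i ≠ k)
    (hjk : j ≠ k) (hs : s ∈ (n i).natAbs.primeFactors) (hq : q ∈ (n j).natAbs.primeFactors)
    (hsL : L ^ 5 < s) (hi : ¬ (n i).natAbs.Prime)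
    (hrad : L ^ (l + 12) ≤ (radN (n i).natAbs : ℝ) * radN (n j).natAbs) :
    HasSmallIndepDeriv n (L ^ (2 * l)) := by
  have hL := h.pos
  by_cases hp : ∃ p ∈ (n i).natAbs.primeFactors, p ≠ s
  · obtain ⟨p, hp, hps⟩ := hp
    exact of_large_prime_of_second_prime h (by omega) hn₀ hn hij hik hjk hs hp hq hps hsL
  by_cases hr : ∃ r ∈ (n j).natAbs.primeFactors, L ^ 5 < r
  · obtain ⟨r, hr, hrL⟩ := hr
    exact of_two_large_primes h hn₀ hn hij hik hjk hs hr hsL hrL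
  push Not at hp hr
  have hfactors : (n i).natAbs.primeFactors = {s} :=
    Finset.eq_singleton_iff_unique_mem.mpr ⟨hs, hp⟩
  have hs_sq : (s : ℝ) ≤ L ^ (l + 1) := by
    refine (pow_le_pow_iff_left₀ (by positivity) (by positivity) two_ne_zero).mp ?_
    calc (s : ℝ) ^ 2 ≤ |(n i : ℝ)| := by
          rw [← Int.cast_abs, ← Nat.cast_natAbs]
          exact_mod_cast sq_le_of_primeFactors_eq_singleton hfactors hi
      _ ≤ L ^ (2 * l + 2) := hn i
      _ = (L ^ (l + 1)) ^ 2 := by ring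
  refine of_small_primes h (by omega) hn₀ hn hij.symm hjk hik hs hr ?_
  refine le_of_mul_le_mul_left ?_ (pow_pos hL (l + 1))
  calc L ^ (l + 1) * L ^ 11 = L ^ (l + 12) := by ring
    _ ≤ (s : ℝ) * radN (n j).natAbs := by
        rwa [radN, hfactors, Finset.prod_singleton] at hrad
    _ ≤ L ^ (l + 1) * radN (n j).natAbs := by gcongr

end HasSmallIndepDeriv

section ZeroSumTriples

variable {n : Fin 3 → ℤ} {i : Fin 3}

lemma exists_ne_and_ne (i j : Fin 3) : ∃ k, i ≠ k ∧ j ≠ k := by decide +revert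

lemma univ_eq_of_pairwise_ne {i j k : Fin 3} (hij : i ≠ j) (hik : i ≠ k) (hjk : j ≠ k) :
    (Finset.univ : Finset (Fin 3)) = {i, j, k} := by
  decide +revert

lemma exists_ne_natAbs_ne_one (hsum : ∑ i, n i = 0) (hi : 2 < (n i).natAbs) :
    ∃ j, i ≠ j ∧ (n j).natAbs ≠ 1 := by
  by_contra! hunits
  obtain ⟨j, hji⟩ := exists_ne i
  obtain ⟨k, hik, hjk⟩ := exists_ne_and_ne i j
  have hunit_j := hunits j hji.symm
  have hunit_k := hunits k hik
  have hsum : n i + (n j + n k) = 0 := by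
    simpa [univ_eq_of_pairwise_ne hji.symm hik hjk, hji.symm, hik, hjk] using hsum
  omega

variable {l : ℕ} {L : ℝ}

lemma HasSmallIndepDeriv.of_large_prime (h : IsScale (2 * l + 2) L) (hl : 4 ≤ l)
    (hsum : ∑ i, n i = 0) (hcop : Pairwise fun i j ↦ IsCoprime (n i) (n j))
    (hn₀ : ∀ i, n i ≠ 0) (hn : ∀ i, |(n i : ℝ)| ≤ L ^ (2 * l + 2))
    (hprime : ∀ i j, i ≠ j → (n i).natAbs = 1 → ¬ (n j).natAbs.Prime)
    (hrad : L ^ (l + 12) ≤ ∏ i, (radN (n i).natAbs : ℝ)) {s : ℕ}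
    (hs : s ∈ (n i).natAbs.primeFactors) (hsL : L ^ 5 < s) :
    HasSmallIndepDeriv n (L ^ (2 * l)) := by
  have hs_ne {t : Fin 3} (hit : i ≠ t) {p : ℕ} (hp : p ∈ (n t).natAbs.primeFactors) : p ≠ s :=
    fun hps ↦ Finset.disjoint_left.mp (disjoint_primeFactors_natAbs (hcop hit)) hs (hps ▸ hp)
  have hi : 2 < (n i).natAbs := by
    have hs_le : s ≤ (n i).natAbs := Nat.le_of_mem_primeFactors hs
    have hL5 : (2 : ℝ) < L ^ 5 :=
      lt_of_lt_of_le (by linarith [h.eight_le]) (le_self_pow₀ h.one_le (by norm_num))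
    exact lt_of_lt_of_le (mod_cast hL5.trans hsL) hs_le
  obtain ⟨j, hij, hj⟩ := exists_ne_natAbs_ne_one hsum hi
  obtain ⟨p, hp⟩ : (n j).natAbs.primeFactors.Nonempty :=
    Nat.nonempty_primeFactors.mpr (by have := hn₀ j; omega)
  obtain ⟨k, hik, hjk⟩ := exists_ne_and_ne i j
  by_cases hk : (n k).natAbs = 1
  · refine .of_large_prime_of_not_prime h hl hn₀ hn hij hik hjk hs hp hsL
      (hprime k i hik.symm hk) ?_
    rw [univ_eq_of_pairwise_ne hij hik hjk] at hrad
    simpa [hij, hik, hjk, hk, radN] using hrad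
  · obtain ⟨q, hq⟩ : (n k).natAbs.primeFactors.Nonempty :=
      Nat.nonempty_primeFactors.mpr (by have := hn₀ k; omega)
    exact .of_large_prime_of_primes h (by omega) hn₀ hn hij hik hjk hs hp hq
      (hs_ne hij hp) (hs_ne hik hq) hsL

lemma HasSmallIndepDeriv.of_le_prod_radN (h : IsScale (2 * l + 2) L) (hl : 21 ≤ l)
    (hsum : ∑ i, n i = 0) (hcop : Pairwise fun i j ↦ IsCoprime (n i) (n j))
    (hn₀ : ∀ i, n i ≠ 0) (hn : ∀ i, |(n i : ℝ)| ≤ L ^ (2 * l + 2))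
    (hprime : ∀ i j, i ≠ j → (n i).natAbs = 1 → ¬ (n j).natAbs.Prime)
    (hrad : L ^ (l + 12) ≤ ∏ i, (radN (n i).natAbs : ℝ)) :
    HasSmallIndepDeriv n (L ^ (2 * l)) := by
  by_cases hlarge : ∃ i, ∃ s ∈ (n i).natAbs.primeFactors, L ^ 5 < s
  · obtain ⟨i, s, hs, hsL⟩ := hlarge
    exact .of_large_prime h (by omega) hsum hcop hn₀ hn hprime hrad hs hsL
  push Not at hlarge
  obtain ⟨i, hi⟩ : ∃ i, L ^ 11 ≤ (radN (n i).natAbs : ℝ) := by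
    by_contra! hlt
    have hprod : ∏ i, (radN (n i).natAbs : ℝ) < ∏ _i : Fin 3, L ^ 11 :=
      Finset.prod_lt_prod_of_nonempty (fun i _ ↦ mod_cast radN_pos _) (fun i _ ↦ hlt i)
        Finset.univ_nonempty
    rw [Finset.prod_const, Finset.card_fin, ← pow_mul] at hprod
    exact (hrad.trans_lt hprod).not_ge (pow_le_pow_right₀ h.one_le (by omega))
  have hi_two : 2 < (n i).natAbs := by
    have hL11 : (2 : ℝ) < L ^ 11 :=
      lt_of_lt_of_le (by linarith [h.eight_le]) (le_self_pow₀ h.one_le (by norm_num))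
    exact lt_of_lt_of_le (mod_cast hL11.trans_le hi) (radN_le (Int.natAbs_ne_zero.mpr (hn₀ i)))
  obtain ⟨j, hij, hj⟩ := exists_ne_natAbs_ne_one hsum hi_two
  obtain ⟨p, hp⟩ : (n j).natAbs.primeFactors.Nonempty :=
    Nat.nonempty_primeFactors.mpr (by have := hn₀ j; omega)
  obtain ⟨k, hik, hjk⟩ := exists_ne_and_ne i j
  exact .of_small_primes h (by omega) hn₀ hn hij hik hjk hp (hlarge i) hi

end ZeroSumTriples

lemma radN_mul {a b : ℕ} (h : a.Coprime b) : radN (a * b) = radN a * radN b := by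
  rw [radN, h.primeFactors_mul, Finset.prod_union h.disjoint_primeFactors, radN, radN]

lemma not_prime_of_natAbs_eq_one {a b : ℕ}
    (hexc : ¬ ∃ N q : ℕ, q.Prime ∧ ({a, b, a + b} : Multiset ℕ) = {1, N, q}) {i j : Fin 3}
    (hij : i ≠ j) (hi : (![(a : ℤ), b, -(a + b)] i).natAbs = 1) :
    ¬ (![(a : ℤ), b, -(a + b)] j).natAbs.Prime := by
  intro hj
  obtain ⟨k, hik, hjk⟩ := exists_ne_and_ne i j
  refine hexc ⟨(![(a : ℤ), b, -(a + b)] k).natAbs, _, hj, ?_⟩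
  have habs : (fun t ↦ (![(a : ℤ), b, -(a + b)] t).natAbs) = ![a, b, a + b] := by
    ext t
    fin_cases t <;> simp
    omega
  calc ({a, b, a + b} : Multiset ℕ)
      = (Finset.univ : Finset (Fin 3)).val.map ![a, b, a + b] := rfl
    _ = _ := by
      rw [univ_eq_of_pairwise_ne hik hij hjk.symm, ← habs]
      simp [-neg_add_rev, hik, hij, hjk.symm, hi]

lemma exists_memT_of_isScale {a b l : ℕ} {L : ℝ} (h : IsScale (2 * l + 2) L) (hl : 21 ≤ l)
    (ha : 0 < a) (hb : 0 < b) (hab : a.Coprime b) (hc : ((a + b : ℕ) : ℝ) ≤ L ^ (2 * l + 2))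
    (hexc : ¬ ∃ N q : ℕ, q.Prime ∧ ({a, b, a + b} : Multiset ℕ) = {1, N, q})
    (hrad : L ^ (l + 12) ≤ (radN (a * b * (a + b)) : ℝ)) :
    ∃ ψ, MemT a b ψ ∧ Wpsi ψ a b ≠ 0 ∧ dNorm ψ ≤ L ^ (2 * l) := by
  push_cast at hc
  have ha_real : (0 : ℝ) < a := mod_cast ha
  have hb_real : (0 : ℝ) < b := mod_cast hb
  refine HasSmallIndepDeriv.exists_memT hab <| .of_le_prod_radN h hl ?_
    (pairwise_isCoprime_triple (Nat.isCoprime_iff_coprime.mpr hab)) (fun i ↦ ?_) (fun i ↦ ?_)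
    (fun i j hij ↦ not_prime_of_natAbs_eq_one hexc hij) ?_
  · simp [Fin.sum_univ_three]
  · fin_cases i <;> simp <;> omega
  · fin_cases i
    · simpa using by linarith
    · simpa using by linarith
    · simpa [-neg_add_rev, abs_of_nonneg (add_nonneg ha_real.le hb_real.le)] using hc
  · have hac : (a * b).Coprime (a + b) := by
      rw [Nat.coprime_mul_iff_left]
      simpa using ⟨hab, hab.symm⟩
    rw [radN_mul hac, radN_mul hab] at hrad
    have hnatAbs : (-((a : ℤ) + b)).natAbs = a + b := by omega
    simpa [-neg_add_rev, Fin.prod_univ_three, hnatAbs] using hrad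

lemma eventually_isScale {K : ℕ} (hK : K ≠ 0) :
    ∀ᶠ c : ℕ in Filter.atTop, IsScale K ((c : ℝ) ^ (K : ℝ)⁻¹) := by
  have hinv : (0 : ℝ) < (K : ℝ)⁻¹ := by positivity
  have htend : Filter.Tendsto (fun c : ℕ ↦ (c : ℝ) ^ (K : ℝ)⁻¹) Filter.atTop Filter.atTop :=
    (tendsto_rpow_atTop hinv).comp tendsto_natCast_atTop_atTop
  have hlog := tendsto_natCast_atTop_atTop.eventually
    ((isLittleO_log_rpow_atTop hinv).bound (Real.log_pos one_lt_two))
  filter_upwards [htend.eventually_ge_atTop 8, htend.eventually_ge_atTop (primorial K : ℝ),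
    hlog] with c h_eight h_primorial hlog
  refine ⟨h_eight, h_primorial, fun e he ↦ ?_⟩
  rw [Real.rpow_inv_natCast_pow c.cast_nonneg hK] at he
  refine le_of_mul_le_mul_right ?_ (Real.log_pos one_lt_two)
  calc e * Real.log 2 = Real.log (2 ^ e) := (Real.log_pow 2 e).symm
    _ ≤ Real.log c := Real.log_le_log (by positivity) he
    _ ≤ Real.log 2 * (c : ℝ) ^ (K : ℝ)⁻¹ :=
        (le_abs_self _).trans (by simpa [abs_of_nonneg (Real.rpow_nonneg _ _)] using hlog)
    _ = _ := mul_comm _ _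

lemma pow_le_of_lt_mul_rpow {κ M L r : ℝ} {s t : ℕ} (hL : 1 ≤ L) (hκ : κ ≤ L) (hr : 1 ≤ r)
    (ht : 1 ≤ t) (hst : s * M + 1 ≤ t) (h : L ^ t < κ * r ^ M) : L ^ s ≤ r := by
  by_contra! hrs
  refine h.not_ge ?_
  obtain hM | hM := le_total 0 M
  · calc κ * r ^ M ≤ L * (L ^ s) ^ M := by gcongr
      _ = L ^ (s * M + 1) := by
          rw [← Real.rpow_natCast_mul (by positivity), mul_comm, Real.rpow_add_one (by positivity)]
      _ ≤ L ^ t := by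
          rw [← Real.rpow_natCast]
          exact Real.rpow_le_rpow_of_exponent_le hL hst
  · calc κ * r ^ M ≤ L * 1 := by
          gcongr
          exact Real.rpow_le_one_of_one_le_of_nonpos hr hM
      _ ≤ L ^ t := by simpa using le_self_pow₀ hL (by omega)

lemma sdc_of_eventually {η : ℝ}
    (h : ∀ᶠ c : ℕ in Filter.atTop, ∀ a b : ℕ, 0 < a → 0 < b → a + b = c → a.Coprime b →
      (¬ ∃ N q : ℕ, q.Prime ∧ ({a, b, c} : Multiset ℕ) = {1, N, q}) →
      ∃ ψ, MemT a b ψ ∧ Wpsi ψ a b ≠ 0 ∧ dNorm ψ < (c : ℝ) ^ η) : SDC η := by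
  obtain ⟨C, hC⟩ := Filter.eventually_atTop.mp h
  refine (Set.finite_Iic (C, C, C)).subset ?_
  rintro ⟨a, b, c⟩ ⟨ha, hb, hab, hcop, hexc, hnot⟩
  have hcC : c < C := by
    by_contra! hCc
    exact hnot (hC c hCc a b ha hb hab hcop hexc)
  dsimp only at hab
  simp only [Set.mem_Iic, Prod.mk_le_mk]
  omega

theorem sdc_of_masser_oesterle_abc_general {M κ : ℝ} (hM : M < 2)
    (habc : ∀ a b c : ℕ, 0 < a → 0 < b → 0 < c → Nat.Coprime a b → a + b = c →
      (c : ℝ) < κ * (radN (a * b * c) : ℝ) ^ M) :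
    ∃ η : ℝ, 0 < η ∧ η < 1 ∧ SDC η := by
  obtain ⟨l, hl⟩ := exists_nat_ge (max 21 (24 / (2 - M)))
  have hl₁ : 21 ≤ l := by exact_mod_cast (le_max_left (21 : ℝ) _).trans hl
  have hl₂ : 24 ≤ l * (2 - M) :=
    (div_le_iff₀ (by linarith)).mp ((le_max_right _ _).trans hl)
  have hK : 2 * l + 2 ≠ 0 := by omega
  refine ⟨(2 * l + 1) / (2 * l + 2), by positivity,
    (div_lt_one (by positivity)).mpr (by linarith), sdc_of_eventually ?_⟩
  have hκ : ∀ᶠ c : ℕ in Filter.atTop, κ ≤ (c : ℝ) ^ ((2 * l + 2 : ℕ) : ℝ)⁻¹ :=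
    ((tendsto_rpow_atTop (by positivity)).comp
      tendsto_natCast_atTop_atTop).eventually_ge_atTop κ
  filter_upwards [eventually_isScale hK, hκ] with c hscale hκ a b ha hb hab hcop hexc
  set L := (c : ℝ) ^ ((2 * l + 2 : ℕ) : ℝ)⁻¹ with hL
  have hLc : L ^ (2 * l + 2) = c := Real.rpow_inv_natCast_pow c.cast_nonneg hK
  have hη : (c : ℝ) ^ ((2 * l + 1 : ℝ) / (2 * l + 2)) = L ^ (2 * l + 1) := by
    rw [hL, ← Real.rpow_mul_natCast c.cast_nonneg]
    push_cast
    congr 1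
    ring
  have hrad : L ^ (l + 12) ≤ (radN (a * b * c) : ℝ) :=
    pow_le_of_lt_mul_rpow (t := 2 * l + 2) hscale.one_le hκ (mod_cast radN_pos _) (by omega)
      (by push_cast; linarith) (hLc ▸ habc a b c ha hb (by omega) hcop hab)
  subst hab
  obtain ⟨ψ, hψ, hW, hnorm⟩ := exists_memT_of_isScale hscale hl₁ ha hb hcop hLc.ge hexc hrad
  refine ⟨ψ, hψ, hW, hnorm.trans_lt ?_⟩
  rw [hη]
  exact pow_lt_pow_right₀ (by linarith [hscale.eight_le]) (Nat.lt_succ_self _)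

/-- The Masser–Oesterlé abc Conjecture implies the Small Derivatives Conjecture. -/
theorem sdc_of_masser_oesterle_abc
    (habc : ∀ ε : ℝ, 0 < ε → ∃ κ : ℝ, 0 < κ ∧ ∀ a b c : ℕ, 0 < a → 0 < b → 0 < c →
      Nat.Coprime a b → a + b = c →
      (c : ℝ) < κ * (radN (a * b * c) : ℝ) ^ (1 + ε)) :
    ∃ η : ℝ, 0 < η ∧ η < 1 ∧ SDC η := by
  obtain ⟨κ, _, hκ⟩ := habc (1 / 2) (by norm_num)
  exact sdc_of_masser_oesterle_abc_general (by norm_num) hκ
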